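/- arXiv:2309.05483 — 2 statements merged into one kernel-verified Lean document; each statement's English description precedes it below -/
import Mathlib

section
/- Replacement with respect to syntactic correspondence, left decomposition: given MAP and program contexts PC₁, PC₂, if ⊢_MAP^{PC₁,PC₂} e ∝ E₂[e₂] for an evaluation context E₂ and expression e₂, then there exist an evaluation context E₁ and an expression e₁ such that e = E₁[e₁] and ⊢_MAP^{PC₁,PC₂} e₁ ∝ e₂; furthermore, for any expressions ê₁, ê₂, if ⊢_MAP^{PC₁,PC₂} ê₁ ∝ ê₂ then ⊢_MAP^{PC₁,PC₂} E₁[ê₁] ∝ E₂[ê₂]. -/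
/-! Evaluation contexts only contain constructors on which the correspondence is
componentwise, and each constructor on the right comes from exactly one rule. Hence
inverting `Corr` along the path from the root of `E₂` to its hole determines the context
`E₁`: it is `E₂` with every type and method name on that path renamed by the map, and with
the side expressions (the bodies of `let`s) taken from `e`. The proof is an induction on
`E₂`; replacement holds because the side expressions stay related while only the expressions
in the holes change. -/

/-- OOlong expressions, parametric in the types `V` of variables, `T` of types,
`M` of method names and `F` of field names:
`null`, variables, (run-time) locations, field selection `x.f`, field update
`x.f = e`, method call `x.m(e)`, let-bindings `let x : t = e₁ in e₂`, object
creation `new C`, casts `(t) e` and `finish { async {e₁} async {e₂} }; e₃`. -/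
inductive Expr (V T M F : Type) : Type
  | null : Expr V T M F
  | var (x : V) : Expr V T M F
  | loc (l : ℕ) : Expr V T M F
  | select (x : V) (f : F) : Expr V T M F
  | update (x : V) (f : F) (e : Expr V T M F) : Expr V T M F
  | call (x : V) (m : M) (e : Expr V T M F) : Expr V T M F
  | lett (x : V) (t : T) (e₁ e₂ : Expr V T M F) : Expr V T M F
  | new (c : T) : Expr V T M F
  | cast (t : T) (e : Expr V T M F) : Expr V T M F
  | fin (e₁ e₂ e₃ : Expr V T M F) : Expr V T M F

/-- The syntactic correspondence `⊢_MAP^{PC₁,PC₂} e₁ ∝ e₂` between expressions, for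
`MAP = (methodMap, typeMap)` (written `mm`, `tm`): two expressions are related when
they have identical shape and every type `t₂` and method name `m₂` occurring in the
right expression appears as `typeMap t₂`, resp. `methodMap m₂`, in the corresponding
position of the left expression; variables, locations, field names and `null` are
related to themselves; all compound expressions are related componentwise. -/
inductive Corr {V T M F : Type} (mm : M → M) (tm : T → T) :
    Expr V T M F → Expr V T M F → Prop
  | null : Corr mm tm Expr.null Expr.null
  | var (x : V) : Corr mm tm (Expr.var x) (Expr.var x)
  | loc (l : ℕ) : Corr mm tm (Expr.loc l) (Expr.loc l)
  | select (x : V) (f : F) : Corr mm tm (Expr.select x f) (Expr.select x f)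
  | update {e₁ e₂ : Expr V T M F} (x : V) (f : F) :
      Corr mm tm e₁ e₂ → Corr mm tm (Expr.update x f e₁) (Expr.update x f e₂)
  | call {e₁ e₂ : Expr V T M F} (x : V) (m : M) :
      Corr mm tm e₁ e₂ → Corr mm tm (Expr.call x (mm m) e₁) (Expr.call x m e₂)
  | lett {a₁ a₂ b₁ b₂ : Expr V T M F} (x : V) (t : T) :
      Corr mm tm a₁ a₂ → Corr mm tm b₁ b₂ →
      Corr mm tm (Expr.lett x (tm t) a₁ b₁) (Expr.lett x t a₂ b₂)
  | new (c : T) : Corr mm tm (Expr.new (tm c)) (Expr.new c)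
  | cast {e₁ e₂ : Expr V T M F} (t : T) :
      Corr mm tm e₁ e₂ → Corr mm tm (Expr.cast (tm t) e₁) (Expr.cast t e₂)
  | fin {a₁ a₂ b₁ b₂ c₁ c₂ : Expr V T M F} :
      Corr mm tm a₁ a₂ → Corr mm tm b₁ b₂ → Corr mm tm c₁ c₂ →
      Corr mm tm (Expr.fin a₁ b₁ c₁) (Expr.fin a₂ b₂ c₂)

/-- The standard single-hole evaluation contexts `E[•]` of OOlong's small-step
operational semantics: the hole, `let x : t = E in e`, `x.f = E`, `x.m(E)`
and `(t) E`. -/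
inductive ECtx (V T M F : Type) : Type
  | hole : ECtx V T M F
  | lett (x : V) (t : T) (E : ECtx V T M F) (e₂ : Expr V T M F) : ECtx V T M F
  | update (x : V) (f : F) (E : ECtx V T M F) : ECtx V T M F
  | call (x : V) (m : M) (E : ECtx V T M F) : ECtx V T M F
  | cast (t : T) (E : ECtx V T M F) : ECtx V T M F

/-- `fill E e` is `E[e]`, the result of plugging expression `e` into the hole of the
evaluation context `E`. -/
def fill {V T M F : Type} : ECtx V T M F → Expr V T M F → Expr V T M F
  | ECtx.hole, e => e
  | ECtx.lett x t E e₂, e => Expr.lett x t (fill E e) e₂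
  | ECtx.update x f E, e => Expr.update x f (fill E e)
  | ECtx.call x m E, e => Expr.call x m (fill E e)
  | ECtx.cast t E, e => Expr.cast t (fill E e)

/-- **Replacement with respect to syntactic correspondence, left decomposition.**
Given `MAP = (methodMap, typeMap)` (and program contexts `PC₁`, `PC₂`), if
`⊢_MAP^{PC₁,PC₂} e ∝ E₂[e₂]` for an evaluation context `E₂` and expression `e₂`, then
there exist an evaluation context `E₁` and an expression `e₁` such that `e = E₁[e₁]`
and `⊢_MAP^{PC₁,PC₂} e₁ ∝ e₂`; furthermore, for any expressions `f₁`, `f₂`, if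
`⊢_MAP^{PC₁,PC₂} f₁ ∝ f₂` then `⊢_MAP^{PC₁,PC₂} E₁[f₁] ∝ E₂[f₂]`. -/
theorem replacement_left {V T M F : Type} (mm : M → M) (tm : T → T)
    (e : Expr V T M F) (E₂ : ECtx V T M F) (e₂ : Expr V T M F)
    (h : Corr mm tm e (fill E₂ e₂)) :
    ∃ (E₁ : ECtx V T M F) (e₁ : Expr V T M F),
      e = fill E₁ e₁ ∧ Corr mm tm e₁ e₂ ∧
      ∀ f₁ f₂ : Expr V T M F,
        Corr mm tm f₁ f₂ → Corr mm tm (fill E₁ f₁) (fill E₂ f₂) := by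
  induction E₂ generalizing e with
  | hole => exact ⟨ECtx.hole, e, rfl, h, fun _ _ hf => hf⟩
  | lett x t E b ih =>
    cases h with
    | lett _ _ ha hb =>
      obtain ⟨E₁, e₁, rfl, he, hE⟩ := ih _ ha
      exact ⟨ECtx.lett x (tm t) E₁ _, e₁, rfl, he,
        fun f₁ f₂ hf => Corr.lett x t (hE f₁ f₂ hf) hb⟩
  | update x f E ih =>
    cases h with
    | update _ _ ha =>
      obtain ⟨E₁, e₁, rfl, he, hE⟩ := ih _ ha
      exact ⟨ECtx.update x f E₁, e₁, rfl, he,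
        fun f₁ f₂ hf => Corr.update x f (hE f₁ f₂ hf)⟩
  | call x m E ih =>
    cases h with
    | call _ _ ha =>
      obtain ⟨E₁, e₁, rfl, he, hE⟩ := ih _ ha
      exact ⟨ECtx.call x (mm m) E₁, e₁, rfl, he,
        fun f₁ f₂ hf => Corr.call x m (hE f₁ f₂ hf)⟩
  | cast t E ih =>
    cases h with
    | cast _ ha =>
      obtain ⟨E₁, e₁, rfl, he, hE⟩ := ih _ ha
      exact ⟨ECtx.cast (tm t) E₁, e₁, rfl, he,
        fun f₁ f₂ hf => Corr.cast t (hE f₁ f₂ hf)⟩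
end

section
/- Replacement with respect to syntactic correspondence, right decomposition: given MAP and program contexts PC₁, PC₂, if ⊢_MAP^{PC₁,PC₂} E₁[e₁] ∝ e for an evaluation context E₁ and expression e₁, then there exist an evaluation context E₂ and an expression e₂ such that e = E₂[e₂] and ⊢_MAP^{PC₁,PC₂} e₁ ∝ e₂; furthermore, for any expressions ê₁, ê₂, if ⊢_MAP^{PC₁,PC₂} ê₁ ∝ ê₂ then ⊢_MAP^{PC₁,PC₂} E₁[ê₁] ∝ E₂[ê₂]. -/
/-- **Replacement with respect to syntactic correspondence, right decomposition.**
Given `MAP = (methodMap, typeMap)` (and program contexts `PC₁`, `PC₂`), if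
`⊢_MAP^{PC₁,PC₂} E₁[e₁] ∝ e` for an evaluation context `E₁` and expression `e₁`, then
there exist an evaluation context `E₂` and an expression `e₂` such that `e = E₂[e₂]`
and `⊢_MAP^{PC₁,PC₂} e₁ ∝ e₂`; furthermore, for any expressions `f₁`, `f₂`, if
`⊢_MAP^{PC₁,PC₂} f₁ ∝ f₂` then `⊢_MAP^{PC₁,PC₂} E₁[f₁] ∝ E₂[f₂]`. -/
theorem replacement_right {V T M F : Type} (mm : M → M) (tm : T → T)
    (E₁ : ECtx V T M F) (e₁ : Expr V T M F) (e : Expr V T M F)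
    (h : Corr mm tm (fill E₁ e₁) e) :
    ∃ (E₂ : ECtx V T M F) (e₂ : Expr V T M F),
      e = fill E₂ e₂ ∧ Corr mm tm e₁ e₂ ∧
      ∀ f₁ f₂ : Expr V T M F,
        Corr mm tm f₁ f₂ → Corr mm tm (fill E₁ f₁) (fill E₂ f₂) := by
  induction E₁ generalizing e with
  | hole => exact ⟨ECtx.hole, e, rfl, h, fun _ _ hf => hf⟩
  | lett x t E b ih =>
    cases h with
    | lett _ t' ha hb =>
      obtain ⟨E₂, e₂, rfl, he, hr⟩ := ih _ ha
      exact ⟨ECtx.lett x t' E₂ _, e₂, rfl, he, fun f₁ f₂ hf => Corr.lett x t' (hr f₁ f₂ hf) hb⟩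
  | update x f E ih =>
    cases h with
    | update _ _ ha =>
      obtain ⟨E₂, e₂, rfl, he, hr⟩ := ih _ ha
      exact ⟨ECtx.update x f E₂, e₂, rfl, he, fun f₁ f₂ hf => Corr.update x f (hr f₁ f₂ hf)⟩
  | call x m E ih =>
    cases h with
    | call _ m' ha =>
      obtain ⟨E₂, e₂, rfl, he, hr⟩ := ih _ ha
      exact ⟨ECtx.call x m' E₂, e₂, rfl, he, fun f₁ f₂ hf => Corr.call x m' (hr f₁ f₂ hf)⟩
  | cast t E ih =>
    cases h with
    | cast t' ha =>
      obtain ⟨E₂, e₂, rfl, he, hr⟩ := ih _ ha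
      exact ⟨ECtx.cast t' E₂, e₂, rfl, he, fun f₁ f₂ hf => Corr.cast t' (hr f₁ f₂ hf)⟩
end
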